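/- The fractional cost of the adjusted correlation metric f on the positive edges in the ℓ1-norm objective satisfies Σ_{u∈V} Σ_{v∈N_u^+} f_uv ≤ 34 · OPT(1). -/

import Mathlib

/-!
Fix an optimal clustering `c`, write `y u` for the number of disagreements at `u`, `Δ u` for the
size of the positive neighborhood and `C u` for the cluster of `u`. On a positive edge the adjusted
metric is at most `[u ∈ R₁] + [v ∈ R₁] + d u v`, and the terms are bounded separately.

* Metric part. If `C u = C v`, every vertex in the symmetric difference of the two positive
  neighborhoods yields a disagreement at `u` or at `v`, so `d u v ≤ y u / Δ u + y v / Δ v`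
  (`corrDist_le`). Summing over `v ∈ N⁺ u` and adding the cut positive edges gives at most
  `3 * OPT(1)`.
* Rounded part. By symmetry it costs twice `∑ u ∈ R₁, Δ u`. Let `u ∈ R₁`. If `y u ≥ Δ u / 10`, charge
  `10 * y u`. Otherwise `C u` nearly coincides with `N⁺ u`, so most of the `(10/3) Δ u` negative
  neighbors at distance at most `0.7` lie outside `C u`, and each of them sends at least
  `0.3 Δ u - y u ≥ 0.2 Δ u` positive edges into `C u`. These edges are cut, whence
  `∑ w ∈ C u, y w ≥ 0.6 (Δ u)²`, and since `|C u| ≤ 1.1 Δ u`, the degree `Δ u` is at most twice the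
  average of `y` over `C u` (`card_Nplus_le_of_mem_R1set`). Averages over clusters sum to the
  total of `y`, so `∑ u ∈ R₁, Δ u ≤ 12 * OPT(1)`.

Altogether the cost is at most `(3 + 2 * 12) * OPT(1) ≤ 34 * OPT(1)`.
-/


open Finset

noncomputable section

variable {V : Type*} [Fintype V] [DecidableEq V]

/-- Positive neighborhood of `u` (including the positive self-loop at `u`). -/
def Nplus (E : V → V → Prop) [DecidableRel E] (u : V) : Finset V :=
  insert u (Finset.univ.filter fun v => v ≠ u ∧ E u v)

/-- Negative neighborhood of `u`. -/
def Nminus (E : V → V → Prop) [DecidableRel E] (u : V) : Finset V :=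
  Finset.univ.filter fun v => v ≠ u ∧ ¬ E u v

/-- The correlation metric `d`. -/
def corrDist (E : V → V → Prop) [DecidableRel E] (u v : V) : ℝ :=
  if u = v then 0
  else 1 - ((Nplus E u ∩ Nplus E v).card : ℝ) / ((Nplus E u ∪ Nplus E v).card : ℝ)

/-- The set `R₁` of vertices `u` with `|N_u^- ∩ {v : d_uv ≤ 0.7}| ≥ (10/3)·Δ_u`. -/
def R1set (E : V → V → Prop) [DecidableRel E] : Finset V :=
  Finset.univ.filter fun u =>
    (10 / 3 : ℝ) * (Nplus E u).card ≤ ((Nminus E u).filter fun v => corrDist E u v ≤ 0.7).card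

/-- The adjusted correlation metric `f`: start from `d`, round negative edges with
`d > 0.7` up to `1`, and set `f_uv = 1` for all `v ≠ u` whenever `u ∈ R₁`. -/
def adjDist (E : V → V → Prop) [DecidableRel E] (u v : V) : ℝ :=
  if u = v then 0
  else if u ∈ R1set E ∨ v ∈ R1set E then 1
  else if ¬ E u v ∧ 0.7 < corrDist E u v then 1
  else corrDist E u v

/-- A clustering is encoded by a map `c : V → V`; the cluster `C(u)` is the fiber of `c` at `u`. -/
def clusterOf (c : V → V) (u : V) : Finset V :=
  Finset.univ.filter fun w => c w = c u

/-- The number of disagreements incident to `u` with respect to the clustering `c`. -/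
def disag (E : V → V → Prop) [DecidableRel E] (c : V → V) (u : V) : ℕ :=
  (Finset.univ.filter fun v =>
    v ≠ u ∧ ((E u v ∧ c u ≠ c v) ∨ (¬ E u v ∧ c u = c v))).card

/-- `OPT(1)`: the minimum total number of disagreements over all clusterings. -/
def OPT1 (E : V → V → Prop) [DecidableRel E] : ℕ :=
  Finset.univ.inf' ⟨id, Finset.mem_univ id⟩ fun c : V → V => ∑ u, disag E c u

/-- `OPT(p)`: the minimum `ℓ_p`-norm of the disagreement vector over all clusterings. -/
def OPTlp (E : V → V → Prop) [DecidableRel E] (p : ℝ) : ℝ :=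
  Finset.univ.inf' ⟨id, Finset.mem_univ id⟩ fun c : V → V =>
    (∑ u, (disag E c u : ℝ) ^ p) ^ (1 / p)

/-- `OPT(∞)`: the minimum `ℓ_∞`-norm of the disagreement vector over all clusterings. -/
def OPTinf (E : V → V → Prop) [DecidableRel E] : ℕ :=
  Finset.univ.inf' ⟨id, Finset.mem_univ id⟩ fun c : V → V => Finset.univ.sup (disag E c)

/-- The set of bad triangles: triples of distinct vertices spanning exactly two positive
edges and one negative edge. -/
def badTriangles (E : V → V → Prop) [DecidableRel E] : Finset (Finset V) :=
  Finset.univ.filter fun T =>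
    ∃ u v w : V, u ≠ v ∧ u ≠ w ∧ v ≠ w ∧ T = {u, v, w} ∧ E u v ∧ E u w ∧ ¬ E v w

/-- The set of vertices `v` such that the edge `(u, v)` is a disagreement; its size is `disag`. -/
def disagSet (E : V → V → Prop) [DecidableRel E] (c : V → V) (u : V) : Finset V :=
  Finset.univ.filter fun v =>
    v ≠ u ∧ ((E u v ∧ c u ≠ c v) ∨ (¬ E u v ∧ c u = c v))

lemma card_disagSet (E : V → V → Prop) [DecidableRel E] (c : V → V) (u : V) :
    (disagSet E c u).card = disag E c u := rfl

lemma mem_disagSet (E : V → V → Prop) [DecidableRel E] (c : V → V) (u v : V) :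
    v ∈ disagSet E c u ↔ v ≠ u ∧ ((E u v ∧ c u ≠ c v) ∨ (¬ E u v ∧ c u = c v)) := by
  simp [disagSet]

lemma mem_Nplus (E : V → V → Prop) [DecidableRel E] (u v : V) :
    v ∈ Nplus E u ↔ v = u ∨ E u v := by
  simp only [Nplus, mem_insert, mem_filter, mem_univ, true_and]
  tauto

lemma mem_Nplus_comm (E : V → V → Prop) [DecidableRel E] (hsymm : ∀ u v, E u v ↔ E v u)
    (u v : V) : v ∈ Nplus E u ↔ u ∈ Nplus E v := by
  rw [mem_Nplus, mem_Nplus, hsymm u v, eq_comm]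

lemma card_Nplus_pos (E : V → V → Prop) [DecidableRel E] (u : V) :
    (0 : ℝ) < (Nplus E u).card := by
  have : 0 < (Nplus E u).card := card_pos.mpr ⟨u, by simp [mem_Nplus]⟩
  exact_mod_cast this

lemma mem_clusterOf (c : V → V) (u w : V) : w ∈ clusterOf c u ↔ c w = c u := by
  simp [clusterOf]

lemma card_union_pos (E : V → V → Prop) [DecidableRel E] (u v : V) :
    (0 : ℝ) < (Nplus E u ∪ Nplus E v).card :=
  (card_Nplus_pos E u).trans_le (by exact_mod_cast card_le_card subset_union_left)

lemma corrDist_nonneg (E : V → V → Prop) [DecidableRel E] (u v : V) : 0 ≤ corrDist E u v := by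
  unfold corrDist
  split_ifs
  · exact le_rfl
  · have h : ((Nplus E u ∩ Nplus E v).card : ℝ) ≤ (Nplus E u ∪ Nplus E v).card := by
      exact_mod_cast card_le_card (inter_subset_left.trans subset_union_left)
    have := div_le_one_of_le₀ h (card_union_pos E u v).le
    linarith

lemma corrDist_le_one (E : V → V → Prop) [DecidableRel E] (u v : V) : corrDist E u v ≤ 1 := by
  unfold corrDist
  split_ifs
  · norm_num
  · have : (0 : ℝ) ≤ ((Nplus E u ∩ Nplus E v).card : ℝ) / (Nplus E u ∪ Nplus E v).card := by
      positivity
    linarith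

/-- Two vertices of the same cluster have positive neighborhoods whose symmetric difference is
made of disagreements. -/
lemma card_Nplus_union_le (E : V → V → Prop) [DecidableRel E] (c : V → V) {u v : V}
    (hu : u ∈ Nplus E v) (hv : v ∈ Nplus E u) (hc : c u = c v) :
    (Nplus E u ∪ Nplus E v).card ≤
      (Nplus E u ∩ Nplus E v).card + (disag E c u + disag E c v) := by
  have hsub : Nplus E u ∪ Nplus E v ⊆
      (Nplus E u ∩ Nplus E v) ∪ (disagSet E c u ∪ disagSet E c v) := by
    intro x hx
    by_cases hxu : x = u
    · subst hxu
      exact mem_union_left _ (mem_inter.mpr ⟨by simp [mem_Nplus], hu⟩)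
    by_cases hxv : x = v
    · subst hxv
      exact mem_union_left _ (mem_inter.mpr ⟨hv, by simp [mem_Nplus]⟩)
    simp only [mem_union, mem_inter, mem_disagSet, mem_Nplus, hxu, hxv, false_or, ne_eq,
      not_false_eq_true, true_and] at hx ⊢
    rw [hc]
    tauto
  calc _ ≤ _ := card_le_card hsub
    _ ≤ _ := Finset.card_union_le _ _
    _ ≤ _ := by
      gcongr
      exact Finset.card_union_le _ _

/-- The metric bound on a positive edge: `1` if the edge is cut, and `y u / Δ u + y v / Δ v`
otherwise. -/
lemma corrDist_le (E : V → V → Prop) [DecidableRel E] (hsymm : ∀ u v, E u v ↔ E v u)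
    (c : V → V) {u v : V} (hv : v ∈ Nplus E u) :
    corrDist E u v ≤ (if c u ≠ c v then 1 else 0) +
      ((disag E c u : ℝ) / (Nplus E u).card + (disag E c v : ℝ) / (Nplus E v).card) := by
  by_cases hc : c u = c v
  · rw [if_neg (not_not.mpr hc), zero_add]
    unfold corrDist
    split_ifs
    · positivity
    have hU := card_union_pos E u v
    have h : ((Nplus E u ∪ Nplus E v).card : ℝ) ≤
        (Nplus E u ∩ Nplus E v).card + ((disag E c u : ℝ) + disag E c v) := by
      exact_mod_cast card_Nplus_union_le E c ((mem_Nplus_comm E hsymm u v).mp hv) hv hc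
    have h1 : (disag E c u : ℝ) / (Nplus E u ∪ Nplus E v).card ≤
        (disag E c u : ℝ) / (Nplus E u).card :=
      div_le_div_of_nonneg_left (by positivity) (card_Nplus_pos E u)
        (by exact_mod_cast card_le_card subset_union_left)
    have h2 : (disag E c v : ℝ) / (Nplus E u ∪ Nplus E v).card ≤
        (disag E c v : ℝ) / (Nplus E v).card :=
      div_le_div_of_nonneg_left (by positivity) (card_Nplus_pos E v)
        (by exact_mod_cast card_le_card subset_union_right)
    refine le_trans ?_ (add_le_add h1 h2)
    rw [← add_div, one_sub_div hU.ne']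
    gcongr
    linarith
  · rw [if_pos hc]
    have := corrDist_le_one E u v
    have : (0 : ℝ) ≤ (disag E c u : ℝ) / (Nplus E u).card +
      (disag E c v : ℝ) / (Nplus E v).card := by positivity
    linarith

/-- Double counting: summing a weight of the endpoint `v` over all ordered positive pairs `(u, v)`
counts each vertex `Δ v` times. -/
lemma sum_Nplus_swap (E : V → V → Prop) [DecidableRel E] (hsymm : ∀ u v, E u v ↔ E v u)
    (g : V → ℝ) :
    ∑ u, ∑ v ∈ Nplus E u, g v = ∑ u, ((Nplus E u).card : ℝ) * g u := by
  rw [Finset.sum_comm' (t' := Finset.univ) (s' := fun v => Nplus E v)]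
  · simp
  · intro x y
    simpa using mem_Nplus_comm E hsymm x y

/-- The number of positive neighbors of `u` outside its cluster is at most `y u`. -/
lemma card_cut_le (E : V → V → Prop) [DecidableRel E] (c : V → V) (u : V) :
    ((Nplus E u).filter fun v => c u ≠ c v).card ≤ disag E c u := by
  rw [← card_disagSet]
  refine card_le_card fun x hx => ?_
  rw [mem_filter, mem_Nplus] at hx
  rw [mem_disagSet]
  have : x ≠ u := by rintro rfl; exact hx.2 rfl
  tauto

/-- The number of negative neighbors of `u` inside its cluster is at most `y u`. -/
lemma card_merged_le (E : V → V → Prop) [DecidableRel E] (c : V → V) (u : V) :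
    ((Nminus E u).filter fun v => c u = c v).card ≤ disag E c u := by
  rw [← card_disagSet]
  refine card_le_card fun x hx => ?_
  simp only [mem_filter, Nminus, mem_univ, true_and] at hx
  rw [mem_disagSet]
  tauto

lemma sum_corrDist_le (E : V → V → Prop) [DecidableRel E] (hsymm : ∀ u v, E u v ↔ E v u)
    (c : V → V) :
    ∑ u, ∑ v ∈ Nplus E u, corrDist E u v ≤ 3 * ∑ u, (disag E c u : ℝ) := by
  have hΔ : ∀ u, ((Nplus E u).card : ℝ) * ((disag E c u : ℝ) / (Nplus E u).card) = disag E c u :=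
    fun u => mul_div_cancel₀ _ (card_Nplus_pos E u).ne'
  have h1 : ∑ u, ∑ v ∈ Nplus E u, (if c u ≠ c v then (1 : ℝ) else 0) ≤
      ∑ u, (disag E c u : ℝ) := by
    refine sum_le_sum fun u _ => ?_
    rw [Finset.sum_boole]
    exact_mod_cast card_cut_le E c u
  have h2 : ∑ u, ∑ _v ∈ Nplus E u, (disag E c u : ℝ) / (Nplus E u).card =
      ∑ u, (disag E c u : ℝ) :=
    sum_congr rfl fun u _ => by rw [sum_const, nsmul_eq_mul, hΔ]
  have h3 : ∑ u, ∑ v ∈ Nplus E u, (disag E c v : ℝ) / (Nplus E v).card =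
      ∑ u, (disag E c u : ℝ) := by
    rw [sum_Nplus_swap E hsymm (fun v => (disag E c v : ℝ) / (Nplus E v).card)]
    exact sum_congr rfl fun u _ => hΔ u
  calc _ ≤ ∑ u, ∑ v ∈ Nplus E u, ((if c u ≠ c v then (1 : ℝ) else 0) +
      ((disag E c u : ℝ) / (Nplus E u).card + (disag E c v : ℝ) / (Nplus E v).card)) :=
        sum_le_sum fun u _ => sum_le_sum fun v hv => corrDist_le E hsymm c hv
    _ ≤ _ := by
      simp only [sum_add_distrib]
      linarith

/-- If `v` is at distance at most `0.7` from `u` and outside `C u`, at least `0.3 Δ u - y u` of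
its positive neighbors lie in `C u`. -/
lemma le_card_Nplus_inter_cluster (E : V → V → Prop) [DecidableRel E] (c : V → V) {u v : V}
    (hne : u ≠ v) (hd : corrDist E u v ≤ 0.7) :
    (3 / 10 : ℝ) * (Nplus E u).card - disag E c u ≤
      ((clusterOf c u).filter fun w => w ∈ Nplus E v).card := by
  have hU := card_union_pos E u v
  have hle : ((Nplus E u).card : ℝ) ≤ (Nplus E u ∪ Nplus E v).card := by
    exact_mod_cast card_le_card subset_union_left
  rw [corrDist, if_neg hne] at hd
  have h1 : (3 / 10 : ℝ) ≤ ((Nplus E u ∩ Nplus E v).card : ℝ) / (Nplus E u ∪ Nplus E v).card := by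
    norm_num at hd ⊢
    linarith
  rw [le_div_iff₀ hU] at h1
  have hsub : Nplus E u ∩ Nplus E v ⊆ ((clusterOf c u).filter fun w => w ∈ Nplus E v) ∪
      ((Nplus E u).filter fun w => c u ≠ c w) := by
    intro x hx
    simp only [mem_inter, mem_union, mem_filter, mem_clusterOf] at hx ⊢
    by_cases h : c u = c x
    · exact Or.inl ⟨h.symm, hx.2⟩
    · exact Or.inr ⟨hx.1, h⟩
  have h2 : (Nplus E u ∩ Nplus E v).card ≤
      ((clusterOf c u).filter fun w => w ∈ Nplus E v).card + disag E c u :=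
    ((card_le_card hsub).trans (Finset.card_union_le _ _)).trans
      (Nat.add_le_add_left (card_cut_le E c u) _)
  have h3 : ((Nplus E u ∩ Nplus E v).card : ℝ) ≤
      ((clusterOf c u).filter fun w => w ∈ Nplus E v).card + (disag E c u : ℝ) := by
    exact_mod_cast h2
  linarith

/-- Positive edges joining the cluster of `u` to a set `T` outside it are disagreements at their
endpoints in the cluster. -/
lemma sum_edges_le (E : V → V → Prop) [DecidableRel E] (hsymm : ∀ u v, E u v ↔ E v u)
    (c : V → V) (u : V) (T : Finset V) (hT : ∀ v ∈ T, c u ≠ c v) :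
    ∑ v ∈ T, ((clusterOf c u).filter fun w => w ∈ Nplus E v).card ≤
      ∑ w ∈ clusterOf c u, disag E c w := by
  have hswap : ∑ v ∈ T, ((clusterOf c u).filter fun w => w ∈ Nplus E v).card =
      ∑ w ∈ clusterOf c u, (T.filter fun v => w ∈ Nplus E v).card := by
    simp only [card_filter]
    exact Finset.sum_comm
  rw [hswap]
  refine sum_le_sum fun w hw => ?_
  rw [← card_disagSet]
  refine card_le_card fun v hv => ?_
  rw [mem_filter, mem_Nplus] at hv
  rw [mem_clusterOf] at hw
  have hcut : c w ≠ c v := hw ▸ hT v hv.1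
  have hne : v ≠ w := fun h => hcut (h ▸ rfl)
  rw [mem_disagSet]
  refine ⟨hne, Or.inl ⟨?_, hcut⟩⟩
  rcases hv.2 with h | h
  · exact absurd h.symm hne
  · exact (hsymm v w).mp h

lemma card_clusterOf_le (E : V → V → Prop) [DecidableRel E] (c : V → V) (u : V) :
    (clusterOf c u).card ≤ (Nplus E u).card + disag E c u := by
  have hsub : clusterOf c u ⊆ Nplus E u ∪ ((Nminus E u).filter fun v => c u = c v) := by
    intro x hx
    simp only [mem_clusterOf, mem_union, mem_Nplus, mem_filter, Nminus, mem_univ,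
      true_and] at hx ⊢
    have := hx.symm
    tauto
  exact ((card_le_card hsub).trans (Finset.card_union_le _ _)).trans
    (Nat.add_le_add_left (card_merged_le E c u) _)

/-- Each `u ∈ R₁` pays for its positive degree by its own disagreements and by the average number
of disagreements in its cluster. -/
lemma card_Nplus_le_of_mem_R1set (E : V → V → Prop) [DecidableRel E]
    (hsymm : ∀ u v, E u v ↔ E v u) (c : V → V) {u : V} (hu : u ∈ R1set E) :
    ((Nplus E u).card : ℝ) ≤ 10 * disag E c u +
      2 * ∑ w ∈ clusterOf c u, (disag E c w : ℝ) / (clusterOf c u).card := by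
  have hD := card_Nplus_pos E u
  have hC : (0 : ℝ) < (clusterOf c u).card := by
    exact_mod_cast card_pos.mpr ⟨u, by simp [mem_clusterOf]⟩
  rw [← Finset.sum_div]
  have hsum0 : (0 : ℝ) ≤ (∑ w ∈ clusterOf c u, (disag E c w : ℝ)) / (clusterOf c u).card := by
    positivity
  by_cases hy : ((Nplus E u).card : ℝ) ≤ 10 * disag E c u
  · linarith
  push Not at hy
  set S := (Nminus E u).filter fun v => corrDist E u v ≤ 0.7 with hS
  set T := S.filter fun v => c u ≠ c v with hT
  have hS1 : (10 / 3 : ℝ) * (Nplus E u).card ≤ S.card := by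
    simpa [R1set] using hu
  have hST : S.card ≤ T.card + disag E c u := by
    have h1 : S.card = (S.filter fun v => c u = c v).card + T.card :=
      (card_filter_add_card_filter_not (s := S) (fun v => c u = c v)).symm
    have h2 : (S.filter fun v => c u = c v).card ≤ disag E c u :=
      (card_le_card (filter_subset_filter _ (filter_subset _ _))).trans (card_merged_le E c u)
    omega
  have hST' : (S.card : ℝ) ≤ T.card + disag E c u := by exact_mod_cast hST
  have hTcard : (3 : ℝ) * (Nplus E u).card ≤ T.card := by linarith
  have hedge : (T.card : ℝ) * ((2 / 10 : ℝ) * (Nplus E u).card) ≤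
      ∑ w ∈ clusterOf c u, (disag E c w : ℝ) := by
    have h1 : (T.card : ℝ) * ((2 / 10 : ℝ) * (Nplus E u).card) ≤
        ∑ v ∈ T, (((clusterOf c u).filter fun w => w ∈ Nplus E v).card : ℝ) := by
      rw [← nsmul_eq_mul]
      refine Finset.card_nsmul_le_sum _ _ _ fun v hv => ?_
      have hv' : (v ≠ u ∧ ¬ E u v) ∧ corrDist E u v ≤ 0.7 := by
        simpa [Nminus] using mem_filter.mp (mem_filter.mp hv).1
      have := le_card_Nplus_inter_cluster E c hv'.1.1.symm hv'.2
      linarith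
    refine h1.trans ?_
    exact_mod_cast sum_edges_le E hsymm c u T fun v hv => (mem_filter.mp hv).2
  have hCle : ((clusterOf c u).card : ℝ) ≤ (Nplus E u).card + disag E c u := by
    exact_mod_cast card_clusterOf_le E c u
  have hkey : ((Nplus E u).card : ℝ) ≤
      2 * ((∑ w ∈ clusterOf c u, (disag E c w : ℝ)) / (clusterOf c u).card) := by
    rw [mul_div_assoc', le_div_iff₀ hC]
    nlinarith [mul_le_mul_of_nonneg_right hTcard hD.le, mul_le_mul_of_nonneg_left hCle hD.le,
      mul_lt_mul_of_pos_left hy hD]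
  have : (0 : ℝ) ≤ disag E c u := by positivity
  linarith

/-- The cluster averages of a weight sum to its total. -/
lemma sum_cluster_avg (c : V → V) (g : V → ℝ) :
    ∑ u, ∑ w ∈ clusterOf c u, g w / (clusterOf c u).card = ∑ w, g w := by
  rw [Finset.sum_comm' (t' := Finset.univ) (s' := fun w => clusterOf c w)]
  · refine sum_congr rfl fun w _ => ?_
    have h : ∀ u ∈ clusterOf c w, g w / (clusterOf c u).card = g w / (clusterOf c w).card := by
      intro u hu
      rw [mem_clusterOf] at hu
      simp only [clusterOf, hu]
    have hC : ((clusterOf c w).card : ℝ) ≠ 0 := by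
      exact_mod_cast (card_pos.mpr ⟨w, by simp [mem_clusterOf]⟩).ne'
    rw [sum_congr rfl h, sum_const, nsmul_eq_mul, mul_div_cancel₀ _ hC]
  · intro x y
    simp [mem_clusterOf, eq_comm]

lemma sum_R1set_le (E : V → V → Prop) [DecidableRel E] (hsymm : ∀ u v, E u v ↔ E v u)
    (c : V → V) :
    ∑ u, ((Nplus E u).card : ℝ) * (if u ∈ R1set E then 1 else 0) ≤
      12 * ∑ u, (disag E c u : ℝ) := by
  calc _ ≤ ∑ u, (10 * (disag E c u : ℝ) +
        2 * ∑ w ∈ clusterOf c u, (disag E c w : ℝ) / (clusterOf c u).card) := by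
        refine sum_le_sum fun u _ => ?_
        split_ifs with h
        · rw [mul_one]
          exact card_Nplus_le_of_mem_R1set E hsymm c h
        · rw [mul_zero]
          positivity
    _ = _ := by
      rw [sum_add_distrib, ← mul_sum, ← mul_sum, sum_cluster_avg c fun w => (disag E c w : ℝ)]
      ring

lemma adjDist_le (E : V → V → Prop) [DecidableRel E] {u v : V} (hv : v ∈ Nplus E u) :
    adjDist E u v ≤ (if u ∈ R1set E then 1 else 0) + (if v ∈ R1set E then 1 else 0) +
      corrDist E u v := by
  have hd := corrDist_nonneg E u v
  rw [mem_Nplus] at hv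
  unfold adjDist
  split_ifs with h1 h2 h3 h4 h5 h6 h7 <;> first | linarith | (exfalso; tauto)

/-- the fractional cost of the adjusted correlation metric on the positive
edges in the `ℓ_1`-norm objective is at most `34 · OPT(1)`. -/
theorem l1_frac_cost_pos (E : V → V → Prop) [DecidableRel E]
    (hsymm : ∀ u v, E u v ↔ E v u) :
    ∑ u, ∑ v ∈ Nplus E u, adjDist E u v ≤ 34 * (OPT1 E : ℝ) := by
  obtain ⟨c, -, hc⟩ := Finset.exists_mem_eq_inf' (s := (Finset.univ : Finset (V → V)))
    ⟨id, Finset.mem_univ id⟩ (fun c : V → V => ∑ u, disag E c u)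
  have hOPT : (OPT1 E : ℝ) = ∑ u, (disag E c u : ℝ) := by
    rw [OPT1, hc]
    push_cast
    rfl
  have hR := sum_R1set_le E hsymm c
  have hd := sum_corrDist_le E hsymm c
  have h1 : ∑ u, ∑ _v ∈ Nplus E u, (if u ∈ R1set E then (1 : ℝ) else 0) =
      ∑ u, ((Nplus E u).card : ℝ) * (if u ∈ R1set E then 1 else 0) :=
    sum_congr rfl fun u _ => by rw [sum_const, nsmul_eq_mul]
  have h2 := sum_Nplus_swap E hsymm fun v => if v ∈ R1set E then (1 : ℝ) else 0
  have h0 : (0 : ℝ) ≤ ∑ u, (disag E c u : ℝ) := by positivity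
  have h3 : ∑ u, ∑ v ∈ Nplus E u, adjDist E u v ≤
      ∑ u, ∑ v ∈ Nplus E u, ((if u ∈ R1set E then (1 : ℝ) else 0) +
        (if v ∈ R1set E then 1 else 0) + corrDist E u v) :=
    sum_le_sum fun u _ => sum_le_sum fun v hv => adjDist_le E hv
  simp only [sum_add_distrib] at h3
  rw [hOPT]
  linarith
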